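/- arXiv:2210.07006 — 2 statements merged into one kernel-verified Lean document; each statement's English description precedes it below -/
import Mathlib

section
/- (Performance difference identity for deterministic finite-horizon MDPs.) For any two policies π and μ and any initial state s0, the difference of their values equals the discounted sum, along the trajectory generated by π, of the advantage of π's action under μ's Q functions: V^π_0(s0) − V^μ_0(s0) = Σ_{t=0}^{T−1} γ^t · [Q^μ_t(s_t, π_t(s_t)) − Q^μ_t(s_t, μ_t(s_t))], where s_0 = s0 and s_{t+1} = f_t(s_t, π_t(s_t)) is the trajectory under π. -/
/-- Value function of a policy `π` in a deterministic finite-horizon decision process: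
`fhValue f r γ π n t s` is the value at state `s` and time `t` when `n` time steps
remain until the horizon; thus `V^π_t(s) = fhValue f r γ π (T - t) t s`, which
satisfies `V^π_T(s) = 0` and
`V^π_t(s) = r_t(s, π_t(s)) + γ·V^π_{t+1}(f_t(s, π_t(s)))`. -/
def fhValue {S : Type*} (f : ℕ → S → ℝ → S) (r : ℕ → S → ℝ → ℝ) (γ : ℝ)
    (π : ℕ → S → ℝ) : ℕ → ℕ → S → ℝ
  | 0, _, _ => 0
  | n + 1, t, s => r t s (π t s) + γ * fhValue f r γ π n (t + 1) (f t s (π t s))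

/-- Q function of a policy `μ` at time `t` with horizon `T`:
`Q^μ_t(s, a) = r_t(s, a) + γ·V^μ_{t+1}(f_t(s, a))`. -/
def fhQ {S : Type*} (f : ℕ → S → ℝ → S) (r : ℕ → S → ℝ → ℝ) (γ : ℝ)
    (μ : ℕ → S → ℝ) (T t : ℕ) (s : S) (a : ℝ) : ℝ :=
  r t s a + γ * fhValue f r γ μ (T - (t + 1)) (t + 1) (f t s a)

/-- Trajectory generated by policy `π` from initial state `s0`:
`s_0 = s0`, `s_{t+1} = f_t(s_t, π_t(s_t))`. -/
def fhTraj {S : Type*} (f : ℕ → S → ℝ → S) (π : ℕ → S → ℝ) (s0 : S) : ℕ → S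
  | 0 => s0
  | t + 1 => f t (fhTraj f π s0 t) (π t (fhTraj f π s0 t))

/-!
Split the one-step gap at a state `s` as
`V^π_t(s) - V^μ_t(s) = [Q^μ_t(s, π_t(s)) - Q^μ_t(s, μ_t(s))] + [Q^π_t - Q^μ_t](s, π_t(s))`.
Rewards cancel in the last bracket, leaving `γ` times the gap at time `t + 1` in the state that `π`
moves to. Unrolling this recursion along the trajectory of `π` gives the sum, and the gap
vanishes at the horizon.
-/

lemma eq_sum_range_pow_mul_add_pow_mul {R : Type*} [Semiring R] {c : R} {a g : ℕ → R} {n : ℕ}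
    (hg : ∀ t < n, g t = a t + c * g (t + 1)) :
    g 0 = ∑ t ∈ Finset.range n, c ^ t * a t + c ^ n * g n := by
  induction n with
  | zero => simp
  | succ n ih =>
    calc g 0 = ∑ t ∈ Finset.range n, c ^ t * a t + c ^ n * g n :=
          ih fun t ht => hg t (ht.trans n.lt_succ_self)
      _ = ∑ t ∈ Finset.range n, c ^ t * a t + c ^ n * (a n + c * g (n + 1)) := by
          rw [← hg n n.lt_succ_self]
      _ = ∑ t ∈ Finset.range (n + 1), c ^ t * a t + c ^ (n + 1) * g (n + 1) := by
          rw [Finset.sum_range_succ, mul_add, ← add_assoc, pow_succ, mul_assoc]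

section Bellman

variable {S : Type*} (f : ℕ → S → ℝ → S) (r : ℕ → S → ℝ → ℝ) (γ : ℝ) (π μ : ℕ → S → ℝ)
  {T t : ℕ}

lemma fhValue_eq_fhQ (ht : t < T) (s : S) :
    fhValue f r γ π (T - t) t s = fhQ f r γ π T t s (π t s) := by
  obtain ⟨n, rfl⟩ := Nat.exists_eq_add_of_lt ht
  have remaining : t + n + 1 - t = n + 1 := by omega
  have remaining_succ : t + n + 1 - (t + 1) = n := by omega
  rw [fhQ, remaining, remaining_succ, fhValue]

lemma fhQ_sub_fhQ (s : S) (a : ℝ) :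
    fhQ f r γ π T t s a - fhQ f r γ μ T t s a =
      γ * (fhValue f r γ π (T - (t + 1)) (t + 1) (f t s a) -
        fhValue f r γ μ (T - (t + 1)) (t + 1) (f t s a)) := by
  rw [fhQ, fhQ, add_sub_add_left_eq_sub, mul_sub]

lemma fhValue_sub_fhValue_eq_fhQ_sub_fhQ_add (ht : t < T) (s : S) :
    fhValue f r γ π (T - t) t s - fhValue f r γ μ (T - t) t s =
      (fhQ f r γ μ T t s (π t s) - fhQ f r γ μ T t s (μ t s)) +
        γ * (fhValue f r γ π (T - (t + 1)) (t + 1) (f t s (π t s)) -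
          fhValue f r γ μ (T - (t + 1)) (t + 1) (f t s (π t s))) := by
  rw [fhValue_eq_fhQ f r γ π ht, fhValue_eq_fhQ f r γ μ ht, ← fhQ_sub_fhQ, sub_add_sub_cancel']

end Bellman

theorem performance_difference_general {S : Type*}
    (f : ℕ → S → ℝ → S) (r : ℕ → S → ℝ → ℝ) (γ : ℝ) (T : ℕ)
    (π μ : ℕ → S → ℝ) (s0 : S) :
    fhValue f r γ π T 0 s0 - fhValue f r γ μ T 0 s0 =
      ∑ t ∈ Finset.range T, γ ^ t *
        (fhQ f r γ μ T t (fhTraj f π s0 t) (π t (fhTraj f π s0 t)) -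
          fhQ f r γ μ T t (fhTraj f π s0 t) (μ t (fhTraj f π s0 t))) := by
  let gap (t : ℕ) : ℝ := fhValue f r γ π (T - t) t (fhTraj f π s0 t) -
    fhValue f r γ μ (T - t) t (fhTraj f π s0 t)
  have gap_horizon : gap T = 0 := by simp only [gap, Nat.sub_self, fhValue, sub_zero]
  have unrolled_gap := eq_sum_range_pow_mul_add_pow_mul (g := gap) (n := T) fun t ht =>
    fhValue_sub_fhValue_eq_fhQ_sub_fhQ_add f r γ π μ ht (fhTraj f π s0 t)
  rwa [gap_horizon, mul_zero, add_zero] at unrolled_gap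

/-- Performance difference identity for deterministic finite-horizon
MDPs: for any two policies `π` and `μ` and any initial state `s0`,
`V^π_0(s0) − V^μ_0(s0) = Σ_{t=0}^{T−1} γ^t·[Q^μ_t(s_t, π_t(s_t)) − Q^μ_t(s_t, μ_t(s_t))]`,
where `s_t` is the trajectory under `π`. -/
theorem performance_difference {S : Type*}
    (f : ℕ → S → ℝ → S) (r : ℕ → S → ℝ → ℝ) (γ : ℝ) (hγ : 0 ≤ γ ∧ γ ≤ 1)
    (T : ℕ) (π μ : ℕ → S → ℝ) (s0 : S) :
    fhValue f r γ π T 0 s0 - fhValue f r γ μ T 0 s0 =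
      ∑ t ∈ Finset.range T, γ ^ t *
        (fhQ f r γ μ T t (fhTraj f π s0 t) (π t (fhTraj f π s0 t)) -
          fhQ f r γ μ T t (fhTraj f π s0 t) (μ t (fhTraj f π s0 t))) :=
  performance_difference_general f r γ T π μ s0
end

section
/- Suppose the exploration policy π agrees with the safe policy μ outside the exploration window, i.e. π_t = μ_t for all t ∉ [t1, t2], its actions deviate by at most ξ inside the window, i.e. |π_t(s) − μ_t(s)| ≤ ξ for all s ∈ S and all t ∈ [t1, t2], and for every t ∈ [t1, t2] and every s ∈ S the map a ↦ Q^μ_t(s, a) is L_Q-Lipschitz. Then for every initial state s0, |V^π_0(s0) − V^μ_0(s0)| ≤ L_Q · ξ · Σ_{t=t1}^{t2} γ^t. -/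
/-!
The difference `V^π_t - V^μ_t` telescopes along the trajectory of `π` (the performance difference
lemma): at each visited state one pays the discounted advantage `Q^μ(s, π(s)) - Q^μ(s, μ(s))` of
deviating for a single step and then returning to `μ`. This identity needs no regularity. The
advantage vanishes at times when the two policies agree, and at the remaining times the Lipschitz
bound makes it at most `L_Q * ξ` in absolute value.
-/

section PerformanceDifference

variable {S : Type*} (f : ℕ → S → ℝ → S) (r : ℕ → S → ℝ → ℝ) (γ : ℝ)

/-- Trajectory of a policy `π`: `fhTrajectory f π k t s` is the state at time `t + k`
when `π` is followed from the state `s` at time `t`. -/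
def fhTrajectory (π : ℕ → S → ℝ) : ℕ → ℕ → S → S
  | 0, _, s => s
  | k + 1, t, s => fhTrajectory π k (t + 1) (f t s (π t s))

/-- Advantage of the action `a` over the policy `μ` at time `t` with horizon `T`: the gain from
playing `a` once and following `μ` afterwards. -/
def fhAdvantage (μ : ℕ → S → ℝ) (T t : ℕ) (s : S) (a : ℝ) : ℝ :=
  fhQ f r γ μ T t s a - fhQ f r γ μ T t s (μ t s)

theorem fhAdvantage_self (μ : ℕ → S → ℝ) (T t : ℕ) (s : S) :
    fhAdvantage f r γ μ T t s (μ t s) = 0 :=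
  sub_self _

theorem fhValue_succ_sub_fhValue_succ (π μ : ℕ → S → ℝ) (n t : ℕ) (s : S) :
    fhValue f r γ π (n + 1) t s - fhValue f r γ μ (n + 1) t s =
      fhAdvantage f r γ μ (t + 1 + n) t s (π t s) +
        γ * (fhValue f r γ π n (t + 1) (f t s (π t s)) -
          fhValue f r γ μ n (t + 1) (f t s (π t s))) := by
  simp only [fhAdvantage, fhQ, fhValue, Nat.add_sub_cancel_left]
  ring

theorem fhValue_sub_fhValue_eq_sum_fhAdvantage (π μ : ℕ → S → ℝ) (n t : ℕ) (s : S) :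
    fhValue f r γ π n t s - fhValue f r γ μ n t s =
      ∑ k ∈ Finset.range n, γ ^ k * fhAdvantage f r γ μ (t + n) (t + k) (fhTrajectory f π k t s)
        (π (t + k) (fhTrajectory f π k t s)) := by
  induction n generalizing t s with
  | zero => simp [fhValue]
  | succ n ih =>
    rw [fhValue_succ_sub_fhValue_succ, ih, Finset.sum_range_succ', Finset.mul_sum, add_comm]
    simp only [fhTrajectory, pow_succ', mul_assoc, pow_zero, one_mul, add_zero,
      Nat.add_assoc, Nat.add_comm 1]

variable {f r γ}

theorem abs_fhAdvantage_le {μ : ℕ → S → ℝ} {T t : ℕ} {s : S} {a ξ LQ : ℝ}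
    (hlip : ∀ a1 a2 : ℝ, |fhQ f r γ μ T t s a1 - fhQ f r γ μ T t s a2| ≤ LQ * |a1 - a2|)
    (ha : |a - μ t s| ≤ ξ) :
    |fhAdvantage f r γ μ T t s a| ≤ LQ * ξ := by
  have hLQ : 0 ≤ LQ := by simpa using (abs_nonneg _).trans (hlip 1 0)
  exact (hlip a (μ t s)).trans (mul_le_mul_of_nonneg_left ha hLQ)

end PerformanceDifference

theorem exploration_safety_general {S : Type*}
    (f : ℕ → S → ℝ → S) (r : ℕ → S → ℝ → ℝ) (γ : ℝ)
    (T : ℕ) (W : Finset ℕ) (ξ LQ : ℝ) (π μ : ℕ → S → ℝ)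
    (hW : W ⊆ Finset.range T)
    (hout : ∀ t < T, t ∉ W → π t = μ t)
    (hin : ∀ t ∈ W, ∀ s : S, |π t s - μ t s| ≤ ξ)
    (hlip : ∀ t ∈ W, ∀ (s : S) (a1 a2 : ℝ),
      |fhQ f r γ μ T t s a1 - fhQ f r γ μ T t s a2| ≤ LQ * |a1 - a2|)
    (s0 : S) :
    |fhValue f r γ π T 0 s0 - fhValue f r γ μ T 0 s0| ≤ LQ * ξ * ∑ t ∈ W, |γ| ^ t := by
  let x (t : ℕ) : S := fhTrajectory f π t 0 s0
  let A (t : ℕ) : ℝ := fhAdvantage f r γ μ T t (x t) (π t (x t))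
  have hA_out : ∀ t ∈ Finset.range T, t ∉ W → γ ^ t * A t = 0 := fun t ht htW ↦ by
    simp only [A, hout t (Finset.mem_range.mp ht) htW, fhAdvantage_self, mul_zero]
  have hA_in : ∀ t ∈ W, |A t| ≤ LQ * ξ := fun t ht ↦
    abs_fhAdvantage_le (hlip t ht (x t)) (hin t ht (x t))
  calc |fhValue f r γ π T 0 s0 - fhValue f r γ μ T 0 s0|
      = |∑ t ∈ Finset.range T, γ ^ t * A t| := by
        simp only [fhValue_sub_fhValue_eq_sum_fhAdvantage, zero_add, A, x]
    _ = |∑ t ∈ W, γ ^ t * A t| := by rw [Finset.sum_subset hW hA_out]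
    _ ≤ ∑ t ∈ W, |γ| ^ t * |A t| := by
        simpa only [abs_mul, abs_pow] using Finset.abs_sum_le_sum_abs (fun t ↦ γ ^ t * A t) W
    _ ≤ ∑ t ∈ W, |γ| ^ t * (LQ * ξ) := by
        gcongr with t ht
        exact hA_in t ht
    _ = LQ * ξ * ∑ t ∈ W, |γ| ^ t := by rw [← Finset.sum_mul, mul_comm]

/-- if the exploration policy `π` agrees with the safe policy `μ`
outside the exploration window `[t1, t2]`, deviates from it by at most `ξ` inside
the window, and `a ↦ Q^μ_t(s, a)` is `L_Q`-Lipschitz for every `t ∈ [t1, t2]` and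
state `s`, then `|V^π_0(s0) − V^μ_0(s0)| ≤ L_Q · ξ · Σ_{t=t1}^{t2} γ^t`. -/
theorem exploration_safety {S : Type*}
    (f : ℕ → S → ℝ → S) (r : ℕ → S → ℝ → ℝ) (γ : ℝ) (hγ : 0 ≤ γ ∧ γ ≤ 1)
    (T t1 t2 : ℕ) (ht12 : t1 ≤ t2) (ht2T : t2 ≤ T - 1) (hT : 1 ≤ T)
    (ξ LQ : ℝ) (hξ : 0 < ξ) (hLQ : 0 < LQ)
    (π μ : ℕ → S → ℝ)
    (hout : ∀ t, (t < t1 ∨ t2 < t) → π t = μ t)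
    (hin : ∀ t, t1 ≤ t → t ≤ t2 → ∀ s : S, |π t s - μ t s| ≤ ξ)
    (hlip : ∀ t, t1 ≤ t → t ≤ t2 → ∀ (s : S) (a1 a2 : ℝ),
      |fhQ f r γ μ T t s a1 - fhQ f r γ μ T t s a2| ≤ LQ * |a1 - a2|)
    (s0 : S) :
    |fhValue f r γ π T 0 s0 - fhValue f r γ μ T 0 s0| ≤
      LQ * ξ * ∑ t ∈ Finset.Icc t1 t2, γ ^ t := by
  simpa only [abs_of_nonneg hγ.1] using exploration_safety_general f r γ T (Finset.Icc t1 t2)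
    ξ LQ π μ (by grind) (by grind) (by grind) (by grind) s0
end
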